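/- Suppose given multiplicative characters λ₁,…,λ_r, μ₁,…,μ_s, λ'₁,…,λ'_{r'}, μ'₁,…,μ'_{s'} of k₀ and constants c ∈ ℂ^×, a ∈ k₀^×, such that for every finite extension k₁ of k₀ and every multiplicative character χ of k₁ one has ∏_{i=1}^r g(χ·(λ_i∘N)) · ∏_{j=1}^s g(χ⁻¹·(μ_j∘N)) = c^{[k₁:k₀]} · χ(a) · ∏_{k=1}^{r'} g(χ·(λ'_k∘N)) · ∏_{l=1}^{s'} g(χ⁻¹·(μ'_l∘N)), where N : k₁ → k₀ is the norm map, χ(a) means χ evaluated at the image of a in k₁, and all Gauss sums for characters of k₁ are formed with the additive character ψ∘Tr_{k₁/k₀}. Then r = r', s = s', the multiset {λ₁,…,λ_r} equals the multiset {λ'₁,…,λ'_{r'}}, and the multiset {μ₁,…,μ_s} equals the multiset {μ'₁,…,μ'_{s'}}. (Paper's Lemma 8.) -/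

import Mathlib

open Finset

/-!
At a prime above the residue characteristic `p`, the Gauss sum of `θ ^ a` over `k₁`, where `θ` is
the inverse Teichmüller character and `0 ≤ a < card k₁ - 1`, has valuation proportional to the sum
of the base-`p` digits of `a` (Stickelberger), called the weight of `θ ^ a`. Compare the identity
at `χ = (ρ ∘ N)⁻¹` and at `χ = (ρ ∘ N)⁻¹ * θ⁻¹`. The weights of the factors change by at most
`card k₀`, with one exception: for each `λ = ρ` the weight jumps from `w 1 = 0` to `w θ⁻¹`, which
tends to infinity with `[k₁ : k₀]`. In a single extension of large degree the number of `λ` equal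
to `ρ` is therefore the same on both sides; replacing `χ` by `χ⁻¹` exchanges `λ` and `μ`.
-/

section DigitSum

/-- The sum `s_p(a)` of the base-`p` digits of `a`, which is the exponent in Stickelberger's
theorem on the valuation of Gauss sums. -/
def digitSum (p a : ℕ) : ℕ := (p.digits a).sum

@[simp]
theorem digitSum_zero (p : ℕ) : digitSum p 0 = 0 := by simp [digitSum]

theorem digitSum_le (p a : ℕ) : digitSum p a ≤ a := Nat.digit_sum_le p a

theorem digitSum_add_mul {p r : ℕ} (hr : r < p) (m : ℕ) :
    digitSum p (r + p * m) = r + digitSum p m := by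
  rcases Nat.eq_zero_or_pos (r + p * m) with h | h
  · obtain ⟨rfl, hm⟩ := Nat.add_eq_zero_iff.mp h
    obtain rfl := (Nat.mul_eq_zero.mp hm).resolve_left hr.ne'
    simp
  · rcases Nat.lt_or_ge 1 p with hp | hp
    · rw [digitSum, Nat.digits_def' hp h, List.sum_cons, Nat.add_mul_mod_self_left,
        Nat.mod_eq_of_lt hr, Nat.add_mul_div_left _ _ (by lia), Nat.div_eq_of_lt hr, zero_add,
        digitSum]
    · obtain ⟨rfl, rfl⟩ : p = 1 ∧ r = 0 := by lia
      simp

theorem digitSum_eq_mod_add_div {p : ℕ} (hp : 0 < p) (a : ℕ) :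
    digitSum p a = a % p + digitSum p (a / p) := by
  rw [← digitSum_add_mul (Nat.mod_lt a hp), Nat.mod_add_div]

theorem digitSum_add_pow_mul {p : ℕ} (hp : 0 < p) {f x : ℕ} (hx : x < p ^ f) (y : ℕ) :
    digitSum p (x + p ^ f * y) = digitSum p x + digitSum p y := by
  induction f generalizing x with
  | zero =>
    obtain rfl : x = 0 := by simpa using hx
    simp
  | succ f ih =>
    have hdiv : x / p < p ^ f := Nat.div_lt_of_lt_mul (by rwa [← pow_succ'])
    have hsplit : x + p ^ (f + 1) * y = x % p + p * (x / p + p ^ f * y) := by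
      rw [mul_add, ← add_assoc, Nat.mod_add_div, pow_succ', mul_assoc]
    rw [hsplit, digitSum_add_mul (Nat.mod_lt x hp), ih hdiv, digitSum_eq_mod_add_div hp x,
      add_assoc]

theorem digitSum_complement_add {p n a : ℕ} (ha : a < p ^ n) :
    digitSum p (p ^ n - 1 - a) + digitSum p a = n * (p - 1) := by
  have hp : 0 < p ∨ n = 0 := by
    rcases Nat.eq_zero_or_pos p with rfl | hp
    · rcases n with _ | n <;> simp_all
    · exact .inl hp
  induction n generalizing a with
  | zero =>
    obtain rfl : a = 0 := by simpa using ha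
    simp
  | succ n ih =>
    have hp : 0 < p := by simpa using hp
    have hmod : a % p < p := Nat.mod_lt a hp
    have hdiv : a / p < p ^ n := Nat.div_lt_of_lt_mul (by rwa [← pow_succ'])
    have hsplit : p ^ (n + 1) - 1 - a = (p - 1 - a % p) + p * (p ^ n - 1 - a / p) := by
      obtain ⟨u, hu⟩ := Nat.exists_eq_add_of_lt hdiv
      have hmul : p ^ (n + 1) = p * (a / p) + p * u + p := by rw [pow_succ', hu]; ring
      have hu' : p ^ n - 1 - a / p = u := by lia
      have := Nat.mod_add_div a p
      rw [hu', hmul]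
      lia
    rw [hsplit, digitSum_add_mul (by lia), digitSum_eq_mod_add_div hp a, add_mul,
      ← ih hdiv (.inl hp)]
    lia

theorem abs_digitSum_sub_digitSum_le {p : ℕ} (hp : 0 < p) {f x x' : ℕ} (hx : x < p ^ f)
    (hx' : x' < p ^ f) (y : ℕ) :
    |(digitSum p (x + p ^ f * y) - digitSum p (x' + p ^ f * y) : ℤ)| ≤ p ^ f := by
  rw [digitSum_add_pow_mul hp hx, digitSum_add_pow_mul hp hx', abs_le]
  have := digitSum_le p x
  have := digitSum_le p x'
  have : ((p ^ f : ℕ) : ℤ) = p ^ f := Nat.cast_pow p f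
  push_cast
  constructor <;> lia

end DigitSum

theorem linearIndependent_addChar (G R : Type*) [AddMonoid G] [CommRing R] [IsDomain R] :
    LinearIndependent R (fun Ψ : AddChar G R => (Ψ : G → R)) :=
  (linearIndependent_monoidHom (Multiplicative G) R).comp AddChar.toMonoidHom
    AddChar.toMonoidHomEquiv.injective

theorem mulShift_surjective_of_isPrimitive {k R : Type*} [CommRing k] [Finite k] [CommRing R]
    [IsDomain R] {Ψ : AddChar k R} (hΨ : Ψ.IsPrimitive) : Function.Surjective Ψ.mulShift := by
  have := Fintype.ofFinite k
  have hindep := linearIndependent_addChar k R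
  have := hindep.finite
  have := Fintype.ofFinite (AddChar k R)
  refine ((Fintype.bijective_iff_injective_and_card _).mpr
    ⟨AddChar.to_mulShift_inj_of_isPrimitive hΨ, ?_⟩).surjective
  refine (Fintype.card_le_of_injective _ (AddChar.to_mulShift_inj_of_isPrimitive hΨ)).antisymm ?_
  simpa only [Module.finrank_fintype_fun_eq_card] using hindep.fintype_card_le_finrank

section Valuation

variable {K Γ₀ : Type*} [Field K] [LinearOrderedCommGroupWithZero Γ₀] (v : Valuation K Γ₀)

theorem valuation_eq_one_of_isOfFinOrder {x : K} (hx : IsOfFinOrder x) : v x = 1 := by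
  obtain ⟨n, hn, hxn⟩ := hx.exists_pow_eq_one
  exact (pow_eq_one_iff.mp (by rw [← map_pow, hxn, map_one])).resolve_right hn.ne'

theorem valuation_eq_one_of_isPrimitiveRoot {n : ℕ} [NeZero n] {ζ : K}
    (hζ : IsPrimitiveRoot ζ n) : v ζ = 1 :=
  valuation_eq_one_of_isOfFinOrder v (hζ.isOfFinOrder (NeZero.ne n))

theorem valuation_one_sub_pow_le {x : K} (hx : v x ≤ 1) (i : ℕ) :
    v (1 - x ^ i) ≤ v (1 - x) := by
  rw [← mul_neg_geom_sum, map_mul]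
  refine mul_le_of_le_one_right' (v.map_sum_le fun j _ => ?_)
  rw [map_pow]
  exact pow_le_one' hx j

theorem valuation_one_sub_pow_eq {ζ : K} {n i : ℕ} [NeZero n] (hζ : IsPrimitiveRoot ζ n)
    (hi : i.Coprime n) : v (1 - ζ ^ i) = v (1 - ζ) := by
  have hv : v ζ = 1 := valuation_eq_one_of_isPrimitiveRoot v hζ
  refine le_antisymm (valuation_one_sub_pow_le v hv.le i) ?_
  obtain ⟨j, -, hj⟩ := (hζ.pow_of_coprime i hi).eq_pow_of_pow_eq_one hζ.pow_eq_one
  conv_lhs => rw [← hj]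
  exact valuation_one_sub_pow_le v (by rw [map_pow, hv, one_pow]) j

theorem valuation_one_sub_pow_pred {p : ℕ} [hp : Fact p.Prime] {ζ : K}
    (hζ : IsPrimitiveRoot ζ p) : v (1 - ζ) ^ (p - 1) = v p := by
  obtain ⟨m, rfl⟩ := Nat.exists_eq_add_one_of_ne_zero hp.out.ne_zero
  have hfactor : ∀ i ∈ range m, v (1 - ζ ^ (i + 1)) = v (1 - ζ) := fun i hi =>
    valuation_one_sub_pow_eq v hζ
      (Nat.coprime_of_lt_prime i.succ_ne_zero (by simpa using hi) hp.out).symm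
  rw [Nat.cast_add_one, ← hζ.prod_one_sub_pow_eq_order, map_prod, prod_congr rfl hfactor,
    prod_const, card_range, Nat.add_sub_cancel]

theorem valuation_one_sub_lt_one {p : ℕ} [Fact p.Prime] (hp : v p < 1) {ζ : K}
    (hζ : IsPrimitiveRoot ζ p) : v (1 - ζ) < 1 := by
  by_contra! h
  exact hp.not_ge (valuation_one_sub_pow_pred v hζ ▸ one_le_pow_of_one_le' h _)

variable {k : Type*} [Field k]

theorem valuation_mulChar_of_ne_zero [Finite k] (χ : MulChar k K) {b : k} (hb : b ≠ 0) :
    v (χ b) = 1 :=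
  valuation_eq_one_of_isOfFinOrder v
    (χ.toMonoidHom.isOfFinOrder ((Units.coeHom k).isOfFinOrder
      (isOfFinOrder_of_finite (Units.mk0 b hb))))

theorem valuation_mulChar_le_one [Finite k] (χ : MulChar k K) (b : k) : v (χ b) ≤ 1 := by
  rcases eq_or_ne b 0 with rfl | hb
  · rw [MulChar.map_zero, map_zero]
    exact zero_le_one
  · exact (valuation_mulChar_of_ne_zero v χ hb).le

theorem valuation_addChar [Finite k] (Ψ : AddChar k K) (b : k) : v (Ψ b) = 1 :=
  valuation_eq_one_of_isOfFinOrder v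
    (Ψ.toMonoidHom.isOfFinOrder (isOfFinOrder_of_finite (Multiplicative.ofAdd b)))

variable [Fintype k]

theorem valuation_gaussSum_le_one (χ : MulChar k K) (Ψ : AddChar k K) :
    v (gaussSum χ Ψ) ≤ 1 :=
  v.map_sum_le fun b _ => by
    rw [map_mul, valuation_addChar v Ψ, mul_one]
    exact valuation_mulChar_le_one v χ b

theorem valuation_jacobiSum_le_one (χ η : MulChar k K) : v (jacobiSum χ η) ≤ 1 :=
  v.map_sum_le fun b _ => by
    rw [map_mul]
    exact mul_le_one' (valuation_mulChar_le_one v χ b) (valuation_mulChar_le_one v η _)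

variable {Ψ : AddChar k K} (hΨ : Ψ ≠ 1)
include hΨ

theorem valuation_gaussSum_one : v (gaussSum (1 : MulChar k K) Ψ) = 1 := by
  rw [gaussSum_one_left hΨ, Valuation.map_neg, map_one]

theorem valuation_gaussSum_mul_le (χ η : MulChar k K) :
    v (gaussSum χ Ψ) * v (gaussSum η Ψ) ≤ v (gaussSum (χ * η) Ψ) := by
  by_cases h : χ * η = 1
  · rw [h, valuation_gaussSum_one v hΨ]
    exact mul_le_one' (valuation_gaussSum_le_one v χ Ψ) (valuation_gaussSum_le_one v η Ψ)
  · rw [← map_mul, ← jacobiSum_mul_nontrivial h, map_mul]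
    exact mul_le_of_le_one_right' (valuation_jacobiSum_le_one v χ η)

theorem valuation_gaussSum_mul_inv {χ : MulChar k K} (hχ : χ ≠ 1) :
    v (gaussSum χ Ψ) * v (gaussSum χ⁻¹ Ψ) = v (Fintype.card k) := by
  rw [← gaussSum_mul_gaussSum_eq_card hχ (AddChar.IsPrimitive.of_ne_one hΨ), map_mul,
    ← mul_gaussSum_inv_eq_gaussSum χ⁻¹ Ψ, map_mul, valuation_mulChar_of_ne_zero v χ⁻¹ (by simp),
    one_mul]

theorem valuation_gaussSum_eq_of_ne_one (χ : MulChar k K) {Ψ' : AddChar k K} (hΨ' : Ψ' ≠ 1) :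
    v (gaussSum χ Ψ) = v (gaussSum χ Ψ') := by
  obtain ⟨a, rfl⟩ := mulShift_surjective_of_isPrimitive (AddChar.IsPrimitive.of_ne_one hΨ') Ψ
  have ha : a ≠ 0 := by
    rintro rfl
    simp at hΨ
  rw [← gaussSum_mulShift χ Ψ' (Units.mk0 a ha), map_mul, Units.val_mk0,
    valuation_mulChar_of_ne_zero v χ ha, one_mul]

end Valuation

section ResidueField

theorem exists_valuationSubring_natCast_lt_one (K : Type*) [Field K] [CharZero K] {p : ℕ}
    (hp : p ≠ 1) : ∃ A : ValuationSubring K, A.valuation (p : K) < 1 := by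
  have hspan : Ideal.span {(p : (Int.castRingHom K).range)} ≠ ⊤ := by
    let e : ℤ ≃+* (Int.castRingHom K).range := RingEquiv.ofBijective _
      ⟨(Int.castRingHom K).rangeRestrict.injective_int, RingHom.rangeRestrict_surjective _⟩
    rw [Ne, Ideal.span_singleton_eq_top, ← map_natCast e, isUnit_map_iff e,
      Int.isUnit_iff_natAbs_eq]
    simpa using hp
  obtain ⟨A, -, hA⟩ := Ideal.image_subset_nonunits_valuationSubring _ hspan
  exact ⟨A, hA ⟨p, Ideal.mem_span_singleton_self _, by simp⟩⟩

theorem isAlgClosed_of_surjective {A κ : Type*} (K : Type*) [CommRing A] [IsIntegrallyClosed A]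
    [Field K] [IsAlgClosed K] [Algebra A K] [IsFractionRing A K] [Field κ] {π : A →+* κ}
    (hπ : Function.Surjective π) : IsAlgClosed κ := by
  refine IsAlgClosed.of_exists_root _ fun q hq hirr => ?_
  obtain ⟨Q, hQ, hdeg, hmonic⟩ := Polynomial.lifts_and_degree_eq_and_monic
    ((Polynomial.lifts_iff_coeff_lifts q).mpr fun n => hπ (q.coeff n)) hq
  have hdegK : (Q.map (algebraMap A K)).degree ≠ 0 := by
    rw [hmonic.degree_map, hdeg]
    exact hirr.degree_pos.ne'
  obtain ⟨x, hx⟩ := IsAlgClosed.exists_root _ hdegK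
  rw [Polynomial.IsRoot, Polynomial.eval_map] at hx
  obtain ⟨y, rfl⟩ := IsIntegrallyClosed.isIntegral_iff.mp ⟨Q, hmonic, hx⟩
  rw [Polynomial.eval₂_at_apply, FaithfulSMul.algebraMap_eq_zero_iff] at hx
  exact ⟨π y, by rw [← hQ, Polynomial.eval_map_apply, hx, map_zero]⟩

variable {K : Type*} [Field K] (A : ValuationSubring K)

theorem residue_eq_iff_valuation_sub_lt_one (x y : A) :
    IsLocalRing.residue A x = IsLocalRing.residue A y ↔ A.valuation (x - y : K) < 1 := by
  rw [← sub_eq_zero, ← map_sub, IsLocalRing.residue_eq_zero_iff, A.valuation_lt_one_iff]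
  rfl

theorem charP_residueField {p : ℕ} [hp : Fact p.Prime] (hA : A.valuation (p : K) < 1) :
    CharP (IsLocalRing.ResidueField A) p := by
  refine (CharP.charP_iff_prime_eq_zero hp.out).mpr ?_
  rw [← map_natCast (IsLocalRing.residue A), ← map_zero (IsLocalRing.residue A),
    residue_eq_iff_valuation_sub_lt_one]
  simpa using hA

theorem nonempty_ringHom_of_charP {k κ : Type*} (p : ℕ) [Fact p.Prime] [Field k] [Finite k]
    [CharP k p] [Field κ] [IsAlgClosed κ] [CharP κ p] : Nonempty (k →+* κ) := by
  let _ := ZMod.algebra k p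
  let _ := ZMod.algebra κ p
  exact ⟨(IsAlgClosed.lift : k →ₐ[ZMod p] κ).toRingHom⟩

end ResidueField

section Teichmuller

variable {k R S : Type*} [Field k] [Finite k] [CommRing R] [IsDomain R] [CommRing S] [IsDomain S]

theorem natCast_card_units_ne_zero (f : k →+* S) : (Nat.card kˣ : S) ≠ 0 := by
  have := Fintype.ofFinite k
  rw [Nat.card_units, Nat.cast_sub Finite.card_pos, ← map_natCast f, Nat.card_eq_fintype_card,
    FiniteField.cast_card_eq_zero]
  simp

theorem isPrimitiveRoot_map_of_natCast_ne_zero (π : R →+* S) {n : ℕ} (hn : (n : S) ≠ 0) {ζ : R}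
    (hζ : IsPrimitiveRoot ζ n) : IsPrimitiveRoot (π ζ) n := by
  have : NeZero (n : S) := ⟨hn⟩
  have hpos : 0 < n := Nat.pos_of_ne_zero fun h => hn (by simp [h])
  rw [← Polynomial.isRoot_cyclotomic_iff, ← Polynomial.map_cyclotomic n π]
  exact (hζ.isRoot_cyclotomic hpos).map

theorem exists_teichmuller_lift (π : R →+* S) (f : k →+* S) {ζ : R}
    (hζ : IsPrimitiveRoot ζ (Nat.card kˣ)) : ∃ ω : MulChar k R, ∀ b, π (ω b) = f b := by
  classical
  have := Fintype.ofFinite k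
  have : NeZero (Nat.card kˣ) := ⟨Nat.card_pos.ne'⟩
  obtain ⟨g, hg⟩ := IsCyclic.exists_generator (α := kˣ)
  have hfg : f g ^ Nat.card kˣ = 1 := by
    rw [← map_pow, ← Units.val_pow_eq_pow_val, pow_card_eq_one', Units.val_one, map_one]
  obtain ⟨i, -, hi⟩ := (isPrimitiveRoot_map_of_natCast_ne_zero π
    (natCast_card_units_ne_zero f) hζ).eq_pow_of_pow_eq_one hfg
  have hroot : (hζ.isUnit (NeZero.ne _)).unit ^ i ∈ rootsOfUnity (Fintype.card kˣ) R := by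
    rw [← Nat.card_eq_fintype_card]
    refine pow_mem ((mem_rootsOfUnity _ _).mpr (Units.ext ?_)) i
    exact hζ.pow_eq_one
  refine ⟨MulChar.ofRootOfUnity hroot hg, fun b => ?_⟩
  rcases eq_or_ne b 0 with rfl | hb
  · simp only [MulChar.map_zero, map_zero]
  obtain ⟨j, hj⟩ := mem_powers_iff_mem_zpowers.mpr (hg (Units.mk0 b hb))
  obtain rfl : (g : k) ^ j = b := by simpa using congrArg Units.val hj
  rw [map_pow, MulChar.ofRootOfUnity_spec, map_pow, map_pow, ← hi]
  simp

end Teichmuller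

section TraceAddChar

/-- The additive character `ψ ∘ Tr` of an `F`-algebra `k` attached to an additive character `ψ`
of `F`. -/
noncomputable def traceAddChar {F R : Type*} (k : Type*) [CommRing F] [CommRing k] [Algebra F k]
    [Monoid R] (ψ : AddChar F R) : AddChar k R :=
  ψ.compAddMonoidHom (Algebra.trace F k).toAddMonoidHom

theorem traceAddChar_apply {F k R : Type*} [CommRing F] [CommRing k] [Algebra F k] [Monoid R]
    (ψ : AddChar F R) (x : k) : traceAddChar k ψ x = ψ (Algebra.trace F k x) := rfl

theorem traceAddChar_ne_one {F k R : Type*} [Field F] [Field k] [Algebra F k]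
    [FiniteDimensional F k] [Algebra.IsSeparable F k] [Monoid R] {ψ : AddChar F R}
    (hψ : ψ ≠ 1) : traceAddChar k ψ ≠ 1 := fun h =>
  hψ (AddChar.compAddMonoidHom_injective_left _ (Algebra.trace_surjective F k) h)

theorem zmodChar_ne_one {n : ℕ} [NeZero n] (hn : 1 < n) {R : Type*} [CommMonoid R] {ζ : R}
    (hζ : IsPrimitiveRoot ζ n) : AddChar.zmodChar n hζ.pow_eq_one ≠ 1 := fun h => by
  have hone := DFunLike.congr_fun h ((1 : ℕ) : ZMod n)
  rw [AddChar.zmodChar_apply', pow_one, AddChar.one_apply] at hone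
  exact hζ.ne_one hn hone

theorem gaussSum_pow_card_traceAddChar {F k R : Type*} [Field F] [Finite F] [Field k] [Fintype k]
    [Algebra F k] [CommRing R] (χ : MulChar k R) (ψ : AddChar F R) :
    gaussSum (χ ^ Nat.card F) (traceAddChar k ψ) = gaussSum χ (traceAddChar k ψ) := by
  have := Fintype.ofFinite F
  let φ := FiniteField.frobeniusAlgEquivOfAlgebraic F k
  refine Fintype.sum_bijective φ φ.bijective _ _ fun x => ?_
  rw [traceAddChar_apply, traceAddChar_apply, Algebra.trace_eq_of_algEquiv φ x,
    MulChar.pow_apply' _ Finite.card_pos.ne', ← map_pow, Nat.card_eq_fintype_card]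
  rfl

theorem sum_units_eq_sum {k M : Type*} [GroupWithZero k] [Fintype k] [DecidableEq k]
    [AddCommMonoid M] (f : k → M) (hf : f 0 = 0) : ∑ x : kˣ, f x = ∑ x, f x := by
  refine Fintype.sum_of_injective Units.val Units.val_injective _ _ (fun x hx => ?_) fun _ => rfl
  obtain rfl : x = 0 := by
    by_contra h
    exact hx ⟨Units.mk0 x h, rfl⟩
  exact hf

theorem sum_inv_mul_trace (F k : Type*) [Field F] [Finite F] [Field k] [Fintype k] [Algebra F k] :
    ∑ x : k, x⁻¹ * algebraMap F k (Algebra.trace F k x) = -1 := by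
  classical
  have hterm : ∀ i ∈ range (Module.finrank F k),
      ∑ x : k, x⁻¹ * x ^ Nat.card F ^ i = if i = 0 then -1 else 0 := by
    intro i hi
    have hinv : ∀ x : kˣ, (x : k)⁻¹ * (x : k) ^ Nat.card F ^ i =
        (x ^ (Nat.card F ^ i - 1) : k) := fun x => by
      rw [← pow_sub_one_mul (pow_pos Finite.card_pos i).ne', mul_comm,
        mul_inv_cancel_right₀ x.ne_zero]
    rw [← sum_units_eq_sum _ (by simp), Fintype.sum_congr _ _ hinv, FiniteField.sum_pow_units]
    congr 1
    rw [eq_iff_iff]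
    constructor
    · intro h
      by_contra h0
      have h2 : 1 < Nat.card F ^ i := Nat.one_lt_pow h0 Finite.one_lt_card
      have h3 : Nat.card F ^ i < Nat.card F ^ Module.finrank F k :=
        Nat.pow_lt_pow_right Finite.one_lt_card (mem_range.mp hi)
      rw [← Nat.card_eq_fintype_card, Module.natCard_eq_pow_finrank (K := F)] at h
      have := Nat.le_of_dvd (by lia) h
      lia
    · rintro rfl
      simp
  simp_rw [FiniteField.algebraMap_trace_eq_sum_pow, mul_sum]
  rw [sum_comm, sum_congr rfl hterm, sum_ite_eq', if_pos (mem_range.mpr Module.finrank_pos)]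

end TraceAddChar

section GaussSumTeichmuller

-- Modulo the kernel of `π`, the sum `∑ x, ω⁻¹ x * (ζ ^ Tr x - 1) / (ζ - 1)` is
-- `∑ x, x⁻¹ * Tr x`.
theorem exists_gaussSum_inv_eq_sub_one_mul {p : ℕ} [Fact p.Prime] {k R S : Type*} [Field k]
    [Fintype k] [Algebra (ZMod p) k] [CommRing R] [IsDomain R] [CommRing S] (π : R →+* S)
    (f : k →+* S) {ω : MulChar k R} (hω : ω ≠ 1) (hωf : ∀ b, π (ω b) = f b) {ζ : R}
    (hζ : ζ ^ p = 1) (hζπ : π ζ = 1) :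
    ∃ s : R, gaussSum ω⁻¹ (traceAddChar k (AddChar.zmodChar p hζ)) = (ζ - 1) * s ∧ π s = -1 := by
  let t : k → ℕ := fun x => (Algebra.trace (ZMod p) k x).val
  refine ⟨∑ x, ω⁻¹ x * ∑ i ∈ range (t x), ζ ^ i, ?_, ?_⟩
  · calc gaussSum ω⁻¹ (traceAddChar k (AddChar.zmodChar p hζ))
        = ∑ x, ω⁻¹ x * ζ ^ t x - ∑ x, ω⁻¹ x := by
          rw [MulChar.sum_eq_zero_of_ne_one (inv_ne_one.mpr hω), sub_zero]
          rfl
      _ = (ζ - 1) * ∑ x, ω⁻¹ x * ∑ i ∈ range (t x), ζ ^ i := by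
          rw [← sum_sub_distrib, mul_sum]
          refine sum_congr rfl fun x _ => ?_
          rw [mul_left_comm, mul_geom_sum, mul_sub_one]
  · have hπ : ∀ x, π (ω⁻¹ x * ∑ i ∈ range (t x), ζ ^ i) =
        f (x⁻¹ * algebraMap (ZMod p) k (Algebra.trace (ZMod p) k x)) := fun x => by
      have ht : algebraMap (ZMod p) k (Algebra.trace (ZMod p) k x) = t x := by
        rw [← map_natCast (algebraMap (ZMod p) k), ZMod.natCast_zmod_val]
      rw [map_mul, MulChar.inv_apply', hωf, map_sum, map_mul, ht, map_natCast]
      simp only [map_pow, hζπ, one_pow, sum_const, card_range, nsmul_one]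
    rw [map_sum, Fintype.sum_congr _ _ hπ, ← map_sum, sum_inv_mul_trace, map_neg, map_one]

theorem gaussSum_ringHomComp {k R S : Type*} [CommRing k] [Fintype k] [CommRing R] [CommRing S]
    (g : R →+* S) (χ : MulChar k R) (Ψ : AddChar k R) :
    gaussSum (χ.ringHomComp g) ((g : R →* S).compAddChar Ψ) = g (gaussSum χ Ψ) := by
  simp only [gaussSum, map_sum, map_mul]
  rfl

theorem valuation_gaussSum_inv_of_residue_eq {p : ℕ} [hp : Fact p.Prime] {k K : Type*} [Field k]
    [Fintype k] [CharP k p] [Field K] {A : ValuationSubring K} (hA : A.valuation (p : K) < 1)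
    {f : k →+* IsLocalRing.ResidueField A} {ω : MulChar k A}
    (hω : ω ≠ 1) (hωf : ∀ b, IsLocalRing.residue A (ω b) = f b) {ζ : K}
    (hζ : IsPrimitiveRoot ζ p) {Ψ : AddChar k K} (hΨ : Ψ ≠ 1) :
    A.valuation (gaussSum (ω.ringHomComp A.subtype)⁻¹ Ψ) = A.valuation (1 - ζ) := by
  let _ := ZMod.algebra k p
  have hζA : ζ ∈ A :=
    (A.valuation_le_one_iff ζ).mp (valuation_eq_one_of_isPrimitiveRoot A.valuation hζ).le
  have hζp : (⟨ζ, hζA⟩ : A) ^ p = 1 := Subtype.ext hζ.pow_eq_one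
  have hζres : IsLocalRing.residue A ⟨ζ, hζA⟩ = 1 := by
    rw [← map_one (IsLocalRing.residue A), residue_eq_iff_valuation_sub_lt_one,
      Valuation.map_sub_swap]
    exact valuation_one_sub_lt_one _ hA hζ
  obtain ⟨s, hs, hsres⟩ := exists_gaussSum_inv_eq_sub_one_mul (IsLocalRing.residue A) f hω hωf
    hζp hζres
  have hs1 : A.valuation (s : K) = 1 := by
    rw [← A.valuation_eq_one_iff, ← IsLocalRing.residue_ne_zero_iff_isUnit, hsres]
    exact neg_ne_zero.mpr one_ne_zero
  have hgauss : gaussSum (ω.ringHomComp A.subtype)⁻¹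
      (traceAddChar k (AddChar.zmodChar p hζ.pow_eq_one)) = (ζ - 1) * s := by
    rw [MulChar.ringHomComp_inv]
    exact (gaussSum_ringHomComp A.subtype _ _).trans (congrArg A.subtype hs)
  rw [valuation_gaussSum_eq_of_ne_one A.valuation hΨ _ (traceAddChar_ne_one
    (zmodChar_ne_one hp.out.one_lt hζ)), hgauss, map_mul, hs1, mul_one, Valuation.map_sub_swap]

end GaussSumTeichmuller

section Stickelberger

theorem orderOf_eq_card_sub_one_of_injective {k R : Type*} [Field k] [Fintype k] [CommRing R]
    {χ : MulChar k R} (hχ : Function.Injective χ) : orderOf χ = Fintype.card k - 1 := by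
  classical
  refine Nat.dvd_antisymm (MulChar.orderOf_dvd_card_sub_one k χ) ?_
  rw [← Fintype.card_units, ← Nat.card_eq_fintype_card, ← IsCyclic.exponent_eq_card]
  refine Monoid.exponent_dvd_of_forall_pow_eq_one fun x => Units.ext (hχ ?_)
  rw [Units.val_pow_eq_pow_val, map_pow, ← MulChar.pow_apply_coe, pow_orderOf_eq_one,
    MulChar.one_apply_coe, Units.val_one, map_one]

variable {K Γ₀ : Type*} [Field K] [LinearOrderedCommGroupWithZero Γ₀] (v : Valuation K Γ₀)
  {p : ℕ} [hp : Fact p.Prime] {k : Type*} [Field k] [Fintype k] [CharP k p]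
  {ζ : K} (hζ : IsPrimitiveRoot ζ p) {Ψ : AddChar k K} (hΨ : Ψ ≠ 1)
include hζ hΨ

theorem valuation_gaussSum_pow_char (χ : MulChar k K) :
    v (gaussSum (χ ^ p) Ψ) = v (gaussSum χ Ψ) := by
  let _ := ZMod.algebra k p
  have hne : traceAddChar k (AddChar.zmodChar p hζ.pow_eq_one) ≠ 1 :=
    traceAddChar_ne_one (zmodChar_ne_one hp.out.one_lt hζ)
  have hfrob := gaussSum_pow_card_traceAddChar χ (AddChar.zmodChar p hζ.pow_eq_one)
  rw [Nat.card_zmod] at hfrob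
  rw [valuation_gaussSum_eq_of_ne_one v hΨ _ hne, valuation_gaussSum_eq_of_ne_one v hΨ _ hne,
    hfrob]

theorem pow_digitSum_le_valuation_gaussSum_pow {P : Γ₀} {χ : MulChar k K}
    (hP : P ≤ v (gaussSum χ Ψ)) (a : ℕ) : P ^ digitSum p a ≤ v (gaussSum (χ ^ a) Ψ) := by
  have hpow (a : ℕ) : P ^ a ≤ v (gaussSum (χ ^ a) Ψ) := by
    induction a with
    | zero => rw [pow_zero, pow_zero, valuation_gaussSum_one v hΨ]
    | succ a ih =>
      rw [pow_succ, pow_succ]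
      exact (mul_le_mul' ih hP).trans (valuation_gaussSum_mul_le v hΨ _ _)
  induction a using Nat.strong_induction_on with
  | _ a ih =>
    rcases Nat.eq_zero_or_pos a with rfl | ha
    · exact (digitSum_zero p).symm ▸ hpow 0
    calc P ^ digitSum p a
        = P ^ (a % p) * P ^ digitSum p (a / p) := by
          rw [digitSum_eq_mod_add_div hp.out.pos, pow_add]
      _ ≤ v (gaussSum (χ ^ (a % p)) Ψ) * v (gaussSum (χ ^ (a / p)) Ψ) :=
          mul_le_mul' (hpow _) (ih _ (Nat.div_lt_self ha hp.out.one_lt))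
      _ = v (gaussSum (χ ^ (a % p)) Ψ) * v (gaussSum (χ ^ (p * (a / p))) Ψ) := by
          rw [mul_comm p, pow_mul, valuation_gaussSum_pow_char v hζ hΨ]
      _ ≤ v (gaussSum (χ ^ a) Ψ) := by
          refine (valuation_gaussSum_mul_le v hΨ _ _).trans_eq ?_
          rw [← pow_add, Nat.mod_add_div]

-- The lower bounds for `χ ^ a` and for its inverse multiply to `v (card k)`, which is the exact
-- value of the product of the two Gauss sums; hence both bounds are equalities.
theorem valuation_gaussSum_pow_eq {χ : MulChar k K}
    (hχ : orderOf χ = Fintype.card k - 1) (hle : v (1 - ζ) ≤ v (gaussSum χ Ψ)) {a : ℕ}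
    (ha : a < Fintype.card k - 1) :
    v (gaussSum (χ ^ a) Ψ) = v (1 - ζ) ^ digitSum p a := by
  rcases Nat.eq_zero_or_pos a with rfl | hpos
  · rw [digitSum_zero, pow_zero, pow_zero, valuation_gaussSum_one v hΨ]
  have hlower := pow_digitSum_le_valuation_gaussSum_pow v hζ hΨ hle
  obtain ⟨n, -, hcard⟩ := FiniteField.card k p
  have hinv : (χ ^ a)⁻¹ = χ ^ (Fintype.card k - 1 - a) := by
    rw [inv_eq_iff_mul_eq_one, ← pow_add, Nat.add_sub_cancel' ha.le, ← hχ, pow_orderOf_eq_one]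
  have hprod : v (gaussSum (χ ^ a) Ψ) * v (gaussSum (χ ^ (Fintype.card k - 1 - a)) Ψ) =
      v (1 - ζ) ^ digitSum p a * v (1 - ζ) ^ digitSum p (Fintype.card k - 1 - a) := by
    rw [← hinv, valuation_gaussSum_mul_inv v hΨ (pow_ne_one_of_lt_orderOf hpos.ne' (hχ ▸ ha)),
      ← pow_add, add_comm, hcard, digitSum_complement_add (by lia), mul_comm, pow_mul,
      valuation_one_sub_pow_pred v hζ, Nat.cast_pow, map_pow]
  have hζ0 : v (1 - ζ) ≠ 0 :=
    v.ne_zero_iff.mpr (sub_ne_zero.mpr (hζ.ne_one hp.out.one_lt).symm)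
  refine le_antisymm ?_ (hlower a)
  refine le_of_mul_le_mul_right ?_ (zero_lt_iff.mpr (pow_ne_zero
    (digitSum p (Fintype.card k - 1 - a)) hζ0))
  exact hprod ▸ mul_le_mul_right (hlower _) _

end Stickelberger

theorem exists_mulChar_valuation_gaussSum_pow_eq {K : Type*} [Field K] [CharZero K] [IsAlgClosed K]
    {p : ℕ} [Fact p.Prime] {A : ValuationSubring K} (hA : A.valuation (p : K) < 1) {ζ : K}
    (hζ : IsPrimitiveRoot ζ p) (k : Type*) [Field k] [Fintype k] [CharP k p] :
    ∃ θ : MulChar k K, orderOf θ = Fintype.card k - 1 ∧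
      ∀ Ψ : AddChar k K, Ψ ≠ 1 → ∀ a < Fintype.card k - 1,
        A.valuation (gaussSum (θ ^ a) Ψ) = A.valuation (1 - ζ) ^ digitSum p a := by
  have := charP_residueField A hA
  have := isAlgClosed_of_surjective K (IsLocalRing.residue_surjective (R := A))
  obtain ⟨f⟩ := nonempty_ringHom_of_charP (κ := IsLocalRing.ResidueField A) (k := k) p
  obtain ⟨η, hη⟩ := HasEnoughRootsOfUnity.exists_primitiveRoot K (Nat.card kˣ)
  have : NeZero (Nat.card kˣ) := ⟨Nat.card_pos.ne'⟩
  have hηA : η ∈ A :=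
    (A.valuation_le_one_iff η).mp (valuation_eq_one_of_isPrimitiveRoot A.valuation hη).le
  obtain ⟨ω, hω⟩ := exists_teichmuller_lift (IsLocalRing.residue A) f (ζ := ⟨η, hηA⟩)
    (IsPrimitiveRoot.of_map_of_injective (f := A.subtype) hη Subtype.val_injective)
  have hinj : Function.Injective (ω.ringHomComp A.subtype) := by
    refine Subtype.val_injective.comp (Function.Injective.of_comp (f := IsLocalRing.residue A) ?_)
    rw [show IsLocalRing.residue A ∘ ω = f from funext hω]
    exact f.injective
  have hord : orderOf (ω.ringHomComp A.subtype)⁻¹ = Fintype.card k - 1 :=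
    (orderOf_inv _).trans (orderOf_eq_card_sub_one_of_injective hinj)
  refine ⟨_, hord, fun Ψ hΨ a ha => valuation_gaussSum_pow_eq _ hζ hΨ hord ?_ ha⟩
  rcases eq_or_ne ω 1 with rfl | hω1
  · rw [MulChar.ringHomComp_one, inv_one, valuation_gaussSum_one _ hΨ]
    exact (valuation_one_sub_lt_one _ hA hζ).le
  · exact (valuation_gaussSum_inv_of_residue_eq hA hω1 hω hζ hΨ).ge

/-- The weight attached by Stickelberger's theorem to the characters of a finite field of
characteristic `p` with a chosen generator `θ` of the character group: the base-`p` digit sum of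
the discrete logarithm to the base `θ`, taken in `[0, card k - 1)`. -/
structure IsStickelbergerWeight {k R : Type*} [Field k] [Fintype k] [CommRing R] (p : ℕ)
    (θ : MulChar k R) (w : MulChar k R → ℕ) : Prop where
  mem_zpowers (χ : MulChar k R) : χ ∈ Subgroup.zpowers θ
  orderOf_eq : orderOf θ = Fintype.card k - 1
  weight_pow {a : ℕ} (ha : a < Fintype.card k - 1) : w (θ ^ a) = digitSum p a

theorem exists_lt_orderOf_pow_eq {G : Type*} [Group G] {θ x : G} (hθ : 0 < orderOf θ)
    (hx : x ∈ Subgroup.zpowers θ) : ∃ a < orderOf θ, θ ^ a = x := by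
  obtain ⟨i, rfl⟩ := (orderOf_pos_iff.mp hθ).mem_powers_iff_mem_zpowers.mpr hx
  exact ⟨i % orderOf θ, Nat.mod_lt i hθ, pow_mod_orderOf θ i⟩

theorem mem_zpowers_of_orderOf_eq_card_sub_one {k R : Type*} [Field k] [Fintype k] [CommRing R]
    [IsDomain R] [HasEnoughRootsOfUnity R (Monoid.exponent kˣ)] {θ : MulChar k R}
    (hθ : orderOf θ = Fintype.card k - 1) (χ : MulChar k R) : χ ∈ Subgroup.zpowers θ := by
  classical
  have htop : Subgroup.zpowers θ = ⊤ := by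
    refine Subgroup.eq_top_of_card_eq _ ?_
    rw [Nat.card_zpowers, hθ, MulChar.card_eq_card_units_of_hasEnoughRootsOfUnity,
      Nat.card_eq_fintype_card, Fintype.card_units]
  exact htop ▸ Subgroup.mem_top χ

theorem exists_isStickelbergerWeight_valuation_gaussSum (K : Type*) [Field K] [CharZero K]
    [IsAlgClosed K] (p : ℕ) [hp : Fact p.Prime] (k : Type*) [Field k] [Fintype k] [CharP k p] :
    ∃ (A : ValuationSubring K) (P : A.ValueGroup) (θ : MulChar k K) (w : MulChar k K → ℕ),
      0 < P ∧ P < 1 ∧ IsStickelbergerWeight p θ w ∧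
      ∀ Ψ : AddChar k K, Ψ ≠ 1 → ∀ χ, A.valuation (gaussSum χ Ψ) = P ^ w χ := by
  obtain ⟨A, hA⟩ := exists_valuationSubring_natCast_lt_one K hp.out.ne_one
  obtain ⟨ζ, hζ⟩ := HasEnoughRootsOfUnity.exists_primitiveRoot K p
  obtain ⟨θ, hθ, hgauss⟩ := exists_mulChar_valuation_gaussSum_pow_eq hA hζ k
  have hpos : 0 < orderOf θ := hθ ▸ Nat.sub_pos_of_lt Fintype.one_lt_card
  have hmem := mem_zpowers_of_orderOf_eq_card_sub_one hθ
  choose log hlog_lt hlog using fun χ => exists_lt_orderOf_pow_eq hpos (hmem χ)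
  refine ⟨A, A.valuation (1 - ζ), θ, fun χ => digitSum p (log χ), ?_,
    valuation_one_sub_lt_one _ hA hζ, ⟨hmem, hθ, fun {a} ha => ?_⟩, fun Ψ hΨ χ => ?_⟩
  · exact zero_lt_iff.mpr
      (A.valuation.ne_zero_iff.mpr (sub_ne_zero.mpr (hζ.ne_one hp.out.one_lt).symm))
  · rw [pow_injOn_Iio_orderOf (hlog_lt _) (hθ ▸ ha : a < orderOf θ) (hlog _)]
  · rw [← hgauss Ψ hΨ _ (hθ ▸ hlog_lt χ), hlog]

section NormMulChar

/-- The character `η ∘ N` of an extension `k₁` of `k₀` attached to a character `η` of `k₀`, as a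
homomorphism in `η`. -/
noncomputable def normMulChar {k₀ R : Type*} (k₁ : Type*) [Field k₀] [Field k₁] [Algebra k₀ k₁]
    [FiniteDimensional k₀ k₁] [CommMonoidWithZero R] : MulChar k₀ R →* MulChar k₁ R where
  toFun η :=
    { toFun := fun b => η (Algebra.norm k₀ b)
      map_one' := by simp only [map_one]
      map_mul' := by simp only [map_mul, implies_true]
      map_nonunit' := fun b hb => by
        rw [show b = 0 by simpa using hb, Algebra.norm_zero, MulChar.map_zero] }
  map_one' := MulChar.ext fun b => by
    rw [MulChar.one_apply_coe]
    exact MulChar.one_apply (b.isUnit.map (Algebra.norm k₀))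
  map_mul' η η' := MulChar.ext fun b => by
    simp only [MulChar.mul_apply]
    exact MulChar.mul_apply η η' _

variable {k₀ k₁ R : Type*} [Field k₀] [Field k₁] [Algebra k₀ k₁]

theorem normMulChar_apply [FiniteDimensional k₀ k₁] [CommMonoidWithZero R] (η : MulChar k₀ R)
    (b : k₁) : normMulChar k₁ η b = η (Algebra.norm k₀ b) := rfl

theorem normMulChar_injective [Finite k₁] [CommMonoidWithZero R] :
    Function.Injective (normMulChar k₁ : MulChar k₀ R →* MulChar k₁ R) := fun η η' h =>
  MulChar.ext fun x => by
    obtain ⟨y, rfl⟩ := FiniteField.unitsMap_norm_surjective k₀ k₁ x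
    exact DFunLike.congr_fun h (y : k₁)

theorem exists_eq_pow_mul_of_pow_eq_one {G : Type*} [Group G] {θ x : G} {m T : ℕ}
    (hθ : orderOf θ = m * T) (hm : 0 < m) (hT : 0 < T) (hx : x ∈ Subgroup.zpowers θ)
    (hxm : x ^ m = 1) : ∃ e < m, x = θ ^ (e * T) := by
  obtain ⟨i, hi, rfl⟩ := exists_lt_orderOf_pow_eq (hθ ▸ Nat.mul_pos hm hT) hx
  rw [← pow_mul, ← orderOf_dvd_iff_pow_eq_one, hθ, mul_comm i] at hxm
  obtain ⟨e, rfl⟩ := Nat.dvd_of_mul_dvd_mul_left hm hxm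
  rw [hθ, mul_comm m] at hi
  exact ⟨e, Nat.lt_of_mul_lt_mul_left hi, by rw [mul_comm]⟩

variable [Fintype k₀] [Fintype k₁]

theorem card_sub_one_eq_mul_geom_sum : Fintype.card k₁ - 1 =
    (Fintype.card k₀ - 1) * ∑ i ∈ range (Module.finrank k₀ k₁), Fintype.card k₀ ^ i := by
  obtain ⟨m, hm⟩ := Nat.exists_eq_add_one_of_ne_zero (Fintype.card_ne_zero (α := k₀))
  rw [Module.card_eq_pow_finrank (K := k₀), hm, ← geom_sum_mul_add m, Nat.add_sub_cancel,
    Nat.add_sub_cancel, mul_comm]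

theorem exists_normMulChar_eq_pow [CommRing R] {θ : MulChar k₁ R}
    (hθ : orderOf θ = Fintype.card k₁ - 1) {η : MulChar k₀ R}
    (hη : normMulChar k₁ η ∈ Subgroup.zpowers θ) :
    ∃ e < Fintype.card k₀ - 1, normMulChar k₁ η =
      θ ^ (e * ∑ i ∈ range (Module.finrank k₀ k₁), Fintype.card k₀ ^ i) := by
  refine exists_eq_pow_mul_of_pow_eq_one (hθ.trans card_sub_one_eq_mul_geom_sum)
    (Nat.sub_pos_of_lt Fintype.one_lt_card)
    (sum_pos (fun i _ => pow_pos Fintype.card_pos i) ⟨0, mem_range.mpr Module.finrank_pos⟩) hη ?_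
  rw [← map_pow, orderOf_dvd_iff_pow_eq_one.mp (MulChar.orderOf_dvd_card_sub_one k₀ η), map_one]

end NormMulChar

namespace IsStickelbergerWeight

variable {k R : Type*} [Field k] [Fintype k] [CommRing R] {p : ℕ} {θ : MulChar k R}
  {w : MulChar k R → ℕ} (hw : IsStickelbergerWeight p θ w)
include hw

theorem weight_one : w 1 = 0 := by
  simpa using hw.weight_pow (Nat.sub_pos_of_lt Fintype.one_lt_card)

theorem weight_inv_add_one [hp : Fact p.Prime] {n : ℕ} (hcard : Fintype.card k = p ^ n) :
    w θ⁻¹ + 1 = n * (p - 1) := by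
  have hcard_lt : 1 < Fintype.card k := Fintype.one_lt_card
  have hinv : θ⁻¹ = θ ^ (Fintype.card k - 1 - 1) := by
    rw [inv_eq_iff_mul_eq_one, ← pow_succ', Nat.sub_add_cancel (by lia), ← hw.orderOf_eq,
      pow_orderOf_eq_one]
  have hone : digitSum p 1 = 1 := by
    simpa using digitSum_add_mul hp.out.one_lt 0
  rw [hinv, hw.weight_pow (by lia), ← digitSum_complement_add (p := p) (a := 1) (by lia), hone,
    hcard]

theorem abs_weight_pow_sub_le (hp : 0 < p) {f x x' m : ℕ} (hx : x < p ^ f) (hx' : x' < p ^ f)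
    (h : x + p ^ f * m < Fintype.card k - 1) (h' : x' + p ^ f * m < Fintype.card k - 1) :
    |(w (θ ^ (x + p ^ f * m)) - w (θ ^ (x' + p ^ f * m)) : ℤ)| ≤ p ^ f := by
  rw [hw.weight_pow h, hw.weight_pow h']
  exact abs_digitSum_sub_digitSum_le hp hx hx' m

end IsStickelbergerWeight

section WeightOfNorm

variable {k₀ k₁ R : Type*} [Field k₀] [Field k₁] [Fintype k₁] [Algebra k₀ k₁] [CommRing R] {p : ℕ}
  {θ : MulChar k₁ R} {w : MulChar k₁ R → ℕ}

theorem finrank_le_weight_inv_add_one [Finite k₀] [hp : Fact p.Prime] [CharP k₀ p]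
    (hw : IsStickelbergerWeight p θ w) : Module.finrank k₀ k₁ ≤ w θ⁻¹ + 1 := by
  have := Fintype.ofFinite k₀
  obtain ⟨f, -, hq⟩ := FiniteField.card k₀ p
  have hcard : Fintype.card k₁ = p ^ (f * Module.finrank k₀ k₁) := by
    rw [Module.card_eq_pow_finrank (K := k₀), hq, pow_mul]
  rw [hw.weight_inv_add_one hcard]
  have hp1 : 0 < p - 1 := Nat.sub_pos_of_lt hp.out.one_lt
  exact (Nat.le_mul_of_pos_left _ f.pos).trans (Nat.le_mul_of_pos_right _ hp1)

variable [Fintype k₀]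

-- With `q = card k₀`, the base-`q` expansion of the logarithm of `η ∘ N` consists of `[k₁ : k₀]`
-- copies of one digit `e ≤ q - 2`, and `e ≠ 0` unless `η = 1`; hence multiplication by `θ ^ (±1)`
-- alters the lowest digit only.
theorem exists_normMulChar_eq_pow_add_mul (hw : IsStickelbergerWeight p θ w) (η : MulChar k₀ R) :
    ∃ e m, e + 1 < Fintype.card k₀ ∧ (η ≠ 1 → e ≠ 0) ∧
      normMulChar k₁ η = θ ^ (e + Fintype.card k₀ * m) ∧
      e + Fintype.card k₀ * m + Module.finrank k₀ k₁ ≤ Fintype.card k₁ - 1 := by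
  obtain ⟨e, he, hη⟩ := exists_normMulChar_eq_pow hw.orderOf_eq (hw.mem_zpowers (normMulChar k₁ η))
  obtain ⟨n, hn⟩ := Nat.exists_eq_add_one_of_ne_zero (Module.finrank_pos (R := k₀) (M := k₁)).ne'
  have hsplit : e * ∑ i ∈ range (Module.finrank k₀ k₁), Fintype.card k₀ ^ i =
      e + Fintype.card k₀ * (e * ∑ i ∈ range n, Fintype.card k₀ ^ i) := by
    rw [hn, geom_sum_succ]
    ring
  refine ⟨e, e * ∑ i ∈ range n, Fintype.card k₀ ^ i, Nat.add_lt_of_lt_sub he, ?_, hsplit ▸ hη, ?_⟩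
  · rintro hη1 rfl
    rw [zero_mul, pow_zero] at hη
    exact hη1 ((map_eq_one_iff _ normMulChar_injective).mp hη)
  · have hgeom : Module.finrank k₀ k₁ ≤
        ∑ i ∈ range (Module.finrank k₀ k₁), Fintype.card k₀ ^ i := by
      simpa using card_nsmul_le_sum (range (Module.finrank k₀ k₁)) (Fintype.card k₀ ^ ·) 1
        fun i _ => Nat.one_le_pow _ _ Fintype.card_pos
    calc e + Fintype.card k₀ * (e * ∑ i ∈ range n, Fintype.card k₀ ^ i) + Module.finrank k₀ k₁
        ≤ (e + 1) * ∑ i ∈ range (Module.finrank k₀ k₁), Fintype.card k₀ ^ i := by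
          rw [← hsplit, add_one_mul]
          exact Nat.add_le_add_left hgeom _
      _ ≤ Fintype.card k₁ - 1 := by
          rw [card_sub_one_eq_mul_geom_sum (k₀ := k₀)]
          exact Nat.mul_le_mul_right _ he

variable [hp : Fact p.Prime] [CharP k₀ p] (hw : IsStickelbergerWeight p θ w)
include hw

theorem abs_weight_normMulChar_mul_sub_le (hdeg : 1 < Module.finrank k₀ k₁) (η : MulChar k₀ R) :
    |(w (normMulChar k₁ η * θ) - w (normMulChar k₁ η) : ℤ)| ≤ Fintype.card k₀ := by
  obtain ⟨f, -, hq⟩ := FiniteField.card k₀ p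
  obtain ⟨e, m, he, -, hη, hm⟩ := exists_normMulChar_eq_pow_add_mul hw η
  rw [hq] at he hη hm
  rw [hη, ← pow_succ, add_right_comm, hq, Nat.cast_pow]
  exact hw.abs_weight_pow_sub_le hp.out.pos (by lia) (by lia) (by lia) (by lia)

theorem abs_weight_normMulChar_mul_inv_sub_le {η : MulChar k₀ R} (hη1 : η ≠ 1) :
    |(w (normMulChar k₁ η * θ⁻¹) - w (normMulChar k₁ η) : ℤ)| ≤ Fintype.card k₀ := by
  obtain ⟨f, -, hq⟩ := FiniteField.card k₀ p
  obtain ⟨e, m, he, he0, hη, hm⟩ := exists_normMulChar_eq_pow_add_mul hw η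
  rw [hq] at he hη hm
  have hfin : 0 < Module.finrank k₀ k₁ := Module.finrank_pos
  obtain ⟨d, rfl⟩ := Nat.exists_eq_add_one_of_ne_zero (he0 hη1)
  have hpow : normMulChar k₁ η * θ⁻¹ = θ ^ (d + p ^ (f : ℕ) * m) := by
    rw [hη, add_right_comm, pow_succ, mul_inv_cancel_right]
  rw [hpow, hη, hq, Nat.cast_pow]
  exact hw.abs_weight_pow_sub_le hp.out.pos (by lia) (by lia) (by lia) (by lia)

end WeightOfNorm

section Count

theorem abs_sum_map_sub_count_mul_le {ι : Type*} [DecidableEq ι] {f : ι → ℤ} {B : ℕ} (ρ : ι)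
    (hf : ∀ x ≠ ρ, |f x| ≤ B) (L : Multiset ι) :
    |(L.map f).sum - L.count ρ * f ρ| ≤ B * L.card := by
  induction L using Multiset.induction with
  | empty => simp
  | cons x L ih =>
    rw [Multiset.map_cons, Multiset.sum_cons, Multiset.card_cons]
    push_cast
    rcases eq_or_ne x ρ with rfl | hx
    · rw [Multiset.count_cons_self, Nat.cast_succ, add_one_mul, add_comm (f x),
        add_sub_add_right_eq_sub]
      linarith [B.cast_nonneg (α := ℤ)]
    · rw [Multiset.count_cons_of_ne hx.symm, add_sub_assoc]
      linarith [abs_add_le (f x) ((L.map f).sum - L.count ρ * f ρ), hf x hx]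

theorem abs_sum_map_le_mul_card {κ : Type*} {g : κ → ℤ} {B : ℕ} (hg : ∀ y, |g y| ≤ B)
    (M : Multiset κ) : |(M.map g).sum| ≤ B * M.card := by
  refine Multiset.abs_sum_le_sum_abs.trans ?_
  have := Multiset.sum_le_card_nsmul (M.map (|g ·|)) B (by simpa using fun y _ => hg y)
  simpa [mul_comm] using this

theorem count_eq_of_sum_map_add_eq {ι κ : Type*} [DecidableEq ι] {f : ι → ℤ} {g : κ → ℤ} {ρ : ι}
    {B : ℕ} (hf : ∀ x ≠ ρ, |f x| ≤ B) (hg : ∀ y, |g y| ≤ B) {L L' : Multiset ι} {M M' : Multiset κ}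
    (hB : B * (L.card + M.card + L'.card + M'.card) < f ρ)
    (h : (L.map f).sum + (M.map g).sum = (L'.map f).sum + (M'.map g).sum) :
    L.count ρ = L'.count ρ := by
  have hL := abs_sum_map_sub_count_mul_le ρ hf L
  have hL' := abs_sum_map_sub_count_mul_le ρ hf L'
  have hM := abs_sum_map_le_mul_card hg M
  have hM' := abs_sum_map_le_mul_card hg M'
  have hρ : 0 < f ρ := lt_of_le_of_lt (by positivity) hB
  have hsub : |((L.count ρ : ℤ) - L'.count ρ) * f ρ| < 1 * f ρ := by
    rw [abs_le] at hL hL' hM hM'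
    rw [abs_lt]
    constructor <;> linarith
  rw [abs_mul, abs_of_pos hρ] at hsub
  have := Int.abs_lt_one_iff.mp (lt_of_mul_lt_mul_right hsub hρ.le)
  lia

end Count

section GaussProd

variable {k₀ k₁ : Type*} [Field k₀] [Field k₁] [Algebra k₀ k₁]

/-- The product `∏ g(χ·(λ∘N)) * ∏ g(χ⁻¹·(μ∘N))` over `λ ∈ L` and `μ ∈ M`, where
`g(χ) = -gaussSum χ Ψ`. -/
noncomputable def gaussProd {R : Type*} [CommRing R] [Fintype k₁] (Ψ : AddChar k₁ R)
    (L M : Multiset (MulChar k₀ R)) (χ : MulChar k₁ R) : R :=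
  (L.map fun η => -gaussSum (χ * normMulChar k₁ η) Ψ).prod *
    (M.map fun η => -gaussSum (χ⁻¹ * normMulChar k₁ η) Ψ).prod

/-- The exponent of the valuation of `gaussProd Ψ L M χ`, when `w` gives the exponents of the
valuations of the Gauss sums of `k₁`. -/
noncomputable def weightSum {R : Type*} [CommRing R] [Finite k₁]
    (w : MulChar k₁ R → ℕ) (L M : Multiset (MulChar k₀ R)) (χ : MulChar k₁ R) : ℕ :=
  (L.map fun η => w (χ * normMulChar k₁ η)).sum +
    (M.map fun η => w (χ⁻¹ * normMulChar k₁ η)).sum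

theorem gaussProd_inv {R : Type*} [CommRing R] [Fintype k₁] (Ψ : AddChar k₁ R)
    (L M : Multiset (MulChar k₀ R)) (χ : MulChar k₁ R) :
    gaussProd Ψ L M χ⁻¹ = gaussProd Ψ M L χ := by
  rw [gaussProd, inv_inv, mul_comm, gaussProd]

theorem cast_weightSum_mul_inv_sub {R : Type*} [CommRing R] [Finite k₁] (w : MulChar k₁ R → ℕ)
    (L M : Multiset (MulChar k₀ R)) (ρ : MulChar k₀ R) (θ : MulChar k₁ R) :
    (weightSum w L M ((normMulChar k₁ ρ)⁻¹ * θ⁻¹) - weightSum w L M (normMulChar k₁ ρ)⁻¹ : ℤ) =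
      (L.map fun η => (w (normMulChar k₁ (ρ⁻¹ * η) * θ⁻¹) - w (normMulChar k₁ (ρ⁻¹ * η)) : ℤ)).sum +
      (M.map fun η => (w (normMulChar k₁ (ρ * η) * θ) - w (normMulChar k₁ (ρ * η)) : ℤ)).sum := by
  simp only [weightSum, mul_inv, inv_inv, map_mul, map_inv, mul_right_comm, Nat.cast_add,
    Nat.cast_multiset_sum, Multiset.map_map, Function.comp_def, Multiset.sum_map_sub]
  ring

theorem pow_sum_map_eq_prod_map_pow {ι M : Type*} [CommMonoid M] (P : M) (f : ι → ℕ)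
    (L : Multiset ι) : P ^ (L.map f).sum = (L.map fun i => P ^ f i).prod := by
  induction L using Multiset.induction with
  | empty => simp
  | cons i L ih => rw [Multiset.map_cons, Multiset.sum_cons, pow_add, ih, Multiset.map_cons,
      Multiset.prod_cons]

section Valuation

variable {K Γ₀ : Type*} [Field K] [Fintype k₁] [LinearOrderedCommGroupWithZero Γ₀]
  {v : Valuation K Γ₀} {P : Γ₀} {Ψ : AddChar k₁ K} {w : MulChar k₁ K → ℕ}
  (hw : ∀ χ, v (gaussSum χ Ψ) = P ^ w χ)
include hw

theorem valuation_gaussProd (L M : Multiset (MulChar k₀ K)) (χ : MulChar k₁ K) :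
    v (gaussProd Ψ L M χ) = P ^ weightSum w L M χ := by
  simp only [gaussProd, weightSum, map_mul, map_multiset_prod, Multiset.map_map, Function.comp_def,
    Valuation.map_neg, hw, pow_add, pow_sum_map_eq_prod_map_pow]

-- The constant and the value of `χ` drop out on multiplying the identity at `χ` crosswise with
-- the one at `χ'`.
theorem weightSum_add_weightSum_eq (hP : 0 < P) (hP1 : P < 1) {L M L' M' : Multiset (MulChar k₀ K)}
    {C : K} {a : k₁} (ha : a ≠ 0)
    (H : ∀ χ, gaussProd Ψ L M χ = C * χ a * gaussProd Ψ L' M' χ) (χ χ' : MulChar k₁ K) :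
    weightSum w L M χ + weightSum w L' M' χ' = weightSum w L M χ' + weightSum w L' M' χ := by
  have hval (χ) : P ^ weightSum w L M χ = v C * P ^ weightSum w L' M' χ := by
    rw [← valuation_gaussProd hw, H, map_mul, map_mul, valuation_mulChar_of_ne_zero v χ ha, mul_one,
      valuation_gaussProd hw]
  refine (pow_right_strictAnti₀ hP hP1).injective ?_
  simp only [pow_add, hval]
  exact mul_right_comm _ _ _

end Valuation

theorem count_eq_of_weightSum_add_eq {R : Type*} [CommRing R] [Fintype k₀] [Fintype k₁]
    [DecidableEq (MulChar k₀ R)] {p : ℕ} [Fact p.Prime] [CharP k₀ p] {θ : MulChar k₁ R}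
    {w : MulChar k₁ R → ℕ} (hw : IsStickelbergerWeight p θ w)
    {L M L' M' : Multiset (MulChar k₀ R)}
    (hdeg : Fintype.card k₀ * (L.card + M.card + L'.card + M'.card) + 1 < Module.finrank k₀ k₁)
    (h : ∀ χ χ', weightSum w L M χ + weightSum w L' M' χ' =
      weightSum w L M χ' + weightSum w L' M' χ) (ρ : MulChar k₀ R) : L.count ρ = L'.count ρ := by
  have hfin := finrank_le_weight_inv_add_one (k₀ := k₀) hw
  refine count_eq_of_sum_map_add_eq
    (f := fun η => w (normMulChar k₁ (ρ⁻¹ * η) * θ⁻¹) - w (normMulChar k₁ (ρ⁻¹ * η)))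
    (g := fun η => w (normMulChar k₁ (ρ * η) * θ) - w (normMulChar k₁ (ρ * η)))
    (B := Fintype.card k₀) (M := M) (M' := M')
    (fun η hη => abs_weight_normMulChar_mul_inv_sub_le hw (inv_mul_eq_one.not.mpr hη.symm))
    (fun η => abs_weight_normMulChar_mul_sub_le hw (by lia) _) ?_ ?_
  · rw [inv_mul_cancel, map_one, one_mul, hw.weight_one, Nat.cast_zero, sub_zero]
    exact_mod_cast show _ < w θ⁻¹ by lia
  · have := h (normMulChar k₁ ρ)⁻¹ ((normMulChar k₁ ρ)⁻¹ * θ⁻¹)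
    rw [← cast_weightSum_mul_inv_sub, ← cast_weightSum_mul_inv_sub]
    lia

end GaussProd

theorem lemma8_gauss_sum_rigidity_general {k₀ k₁ K : Type*} [Field k₀] [Fintype k₀] [Field k₁]
    [Fintype k₁] [Algebra k₀ k₁] [Field K] [CharZero K] [IsAlgClosed K] {Ψ : AddChar k₁ K}
    (hΨ : Ψ ≠ 1) {L M L' M' : Multiset (MulChar k₀ K)}
    (hdeg : Fintype.card k₀ * (L.card + M.card + L'.card + M'.card) + 1 < Module.finrank k₀ k₁)
    {C : K} {a : k₁} (ha : a ≠ 0)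
    (H : ∀ χ : MulChar k₁ K, gaussProd Ψ L M χ = C * χ a * gaussProd Ψ L' M' χ) :
    L = L' ∧ M = M' := by
  classical
  obtain ⟨p, _⟩ := CharP.exists k₀
  have : Fact p.Prime := ⟨CharP.char_is_prime k₀ p⟩
  have : CharP k₁ p := charP_of_injective_algebraMap (algebraMap k₀ k₁).injective p
  obtain ⟨A, P, θ, w, hP, hP1, hw, hgauss⟩ :=
    exists_isStickelbergerWeight_valuation_gaussSum K p k₁
  have hL := count_eq_of_weightSum_add_eq hw hdeg
    (weightSum_add_weightSum_eq (hgauss Ψ hΨ) hP hP1 ha H)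
  have hM := count_eq_of_weightSum_add_eq hw (L := M) (M := L) (L' := M') (M' := L') (by lia)
    (weightSum_add_weightSum_eq (hgauss Ψ hΨ) hP hP1 (inv_ne_zero ha) fun χ => by
      rw [← gaussProd_inv, H, gaussProd_inv, MulChar.inv_apply'])
  exact ⟨Multiset.ext.mpr hL, Multiset.ext.mpr hM⟩

theorem sum_units_mul_norm_mul_trace_eq_gaussSum {k₀ k₁ R : Type*} [Field k₀] [Field k₁]
    [Fintype k₁] [DecidableEq k₁] [Algebra k₀ k₁] [CommRing R] (χ : MulChar k₁ R)
    (η : MulChar k₀ R) (ψ : AddChar k₀ R) :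
    ∑ b : k₁ˣ, χ (b : k₁) * η (Algebra.norm k₀ (b : k₁)) * ψ (Algebra.trace k₀ k₁ (b : k₁)) =
      gaussSum (χ * normMulChar k₁ η) (traceAddChar k₁ ψ) := by
  rw [sum_units_eq_sum (fun b => χ b * η (Algebra.norm k₀ b) * ψ (Algebra.trace k₀ k₁ b))
    (by simp only [MulChar.map_zero, zero_mul])]
  simp only [gaussSum, MulChar.mul_apply, normMulChar_apply, traceAddChar_apply]

theorem gaussProd_traceAddChar_ofFn {k₀ k₁ R : Type*} [Field k₀] [Field k₁] [Fintype k₁]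
    [DecidableEq k₁] [Algebra k₀ k₁] [CommRing R] (ψ : AddChar k₀ R)
    {r s : ℕ} (lam : Fin r → MulChar k₀ R) (mu : Fin s → MulChar k₀ R) (χ : MulChar k₁ R) :
    gaussProd (k₀ := k₀) (traceAddChar k₁ ψ) (List.ofFn lam) (List.ofFn mu) χ =
      (∏ i, -(∑ b : k₁ˣ, χ (b : k₁) * (lam i) (Algebra.norm k₀ (b : k₁)) *
        ψ (Algebra.trace k₀ k₁ (b : k₁)))) *
      (∏ j, -(∑ b : k₁ˣ, χ⁻¹ (b : k₁) * (mu j) (Algebra.norm k₀ (b : k₁)) *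
        ψ (Algebra.trace k₀ k₁ (b : k₁)))) := by
  simp only [gaussProd, sum_units_mul_norm_mul_trace_eq_gaussSum, Multiset.map_coe,
    Multiset.prod_coe, List.map_ofFn, List.prod_ofFn, Function.comp_def]

/-- Lemma 8: an identity of products of Gauss sums
`∏ g(χ(λᵢ∘N)) ∏ g(χ⁻¹(μⱼ∘N)) = c^{[k₁:k₀]} χ(a) ∏ g(χ(λ'ₖ∘N)) ∏ g(χ⁻¹(μ'ₗ∘N))`,
valid for every multiplicative character `χ` of every finite extension `k₁` of `k₀`
(with Gauss sums formed with `ψ∘Tr` and `g(χ) = -Σ_{b} χ(b)ψ_F(b)`), forces the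
collections `(λᵢ)`, `(λ'ₖ)` (resp. `(μⱼ)`, `(μ'ₗ)`) to coincide as multisets. -/
theorem lemma8_gauss_sum_rigidity {k0 : Type} [Field k0] [Fintype k0] [DecidableEq k0]
    (ψ : AddChar k0 ℂ) (hψ : ψ ≠ 1)
    {r s r' s' : ℕ}
    (lam : Fin r → MulChar k0 ℂ) (mu : Fin s → MulChar k0 ℂ)
    (lam' : Fin r' → MulChar k0 ℂ) (mu' : Fin s' → MulChar k0 ℂ)
    (c : ℂ) (hc : c ≠ 0) (a : k0ˣ)
    (H : ∀ (k1 : Type) [Field k1] [Algebra k0 k1] [FiniteDimensional k0 k1]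
        [Fintype k1] [DecidableEq k1], ∀ χ : MulChar k1 ℂ,
      (∏ i, -(∑ b : k1ˣ, χ (b : k1) * (lam i) (Algebra.norm k0 (b : k1)) *
          ψ (Algebra.trace k0 k1 (b : k1)))) *
      (∏ j, -(∑ b : k1ˣ, χ⁻¹ (b : k1) * (mu j) (Algebra.norm k0 (b : k1)) *
          ψ (Algebra.trace k0 k1 (b : k1)))) =
      c ^ (Module.finrank k0 k1) * χ (algebraMap k0 k1 (a : k0)) *
      ((∏ i, -(∑ b : k1ˣ, χ (b : k1) * (lam' i) (Algebra.norm k0 (b : k1)) *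
          ψ (Algebra.trace k0 k1 (b : k1)))) *
       (∏ j, -(∑ b : k1ˣ, χ⁻¹ (b : k1) * (mu' j) (Algebra.norm k0 (b : k1)) *
          ψ (Algebra.trace k0 k1 (b : k1)))))) :
    r = r' ∧ s = s' ∧
      (List.ofFn lam : Multiset (MulChar k0 ℂ)) = (List.ofFn lam' : Multiset (MulChar k0 ℂ)) ∧
      (List.ofFn mu : Multiset (MulChar k0 ℂ)) = (List.ofFn mu' : Multiset (MulChar k0 ℂ)) := by
  classical
  obtain ⟨p, _⟩ := CharP.exists k0
  have : Fact p.Prime := ⟨CharP.char_is_prime k0 p⟩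
  let d := Fintype.card k0 * (r + s + r' + s') + 2
  let k1 := FiniteField.Extension k0 p d
  have := Fintype.ofFinite k1
  have hdeg : Fintype.card k0 * (r + s + r' + s') + 1 < Module.finrank k0 k1 := by
    rw [FiniteField.finrank_extension]
    exact Nat.lt_succ_self _
  have hgauss (χ : MulChar k1 ℂ) :
      gaussProd (k₀ := k0) (traceAddChar k1 ψ) (List.ofFn lam) (List.ofFn mu) χ =
        c ^ Module.finrank k0 k1 * χ (algebraMap k0 k1 a) *
          gaussProd (k₀ := k0) (traceAddChar k1 ψ) (List.ofFn lam') (List.ofFn mu') χ := by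
    simpa only [gaussProd_traceAddChar_ofFn] using H k1 χ
  obtain ⟨hlam, hmu⟩ := lemma8_gauss_sum_rigidity_general (traceAddChar_ne_one hψ)
    (by simpa only [Multiset.coe_card, List.length_ofFn] using hdeg)
    ((map_ne_zero (algebraMap k0 k1)).mpr a.ne_zero) hgauss
  refine ⟨?_, ?_, hlam, hmu⟩
  · simpa using congrArg Multiset.card hlam
  · simpa using congrArg Multiset.card hmu
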